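/- Let n ≥ 1, k = ⌊n/2⌋, let d_0,…,d_k ≥ 0 be not all zero, and set m = Σ_{j=0}^k (j+1)d_j. Then for every 𝔞 ∈ Q_n(d_0,…,d_k) and every i ∈ M(𝔞), the transversal chain T_i(𝔞) is entirely contained in Q_n(d_0,…,d_k), and its length (number of covering relations) equals ℓ_n(d_0,…,d_k) = Σ_{j=0}^k (n − 2j)·d_j. -/

import Mathlib

/- Common definitions following K. O'Hara's spread/degree and the signature
   refinement; elements of A_n(m) are lists of naturals of length n+1 and sum m. -/

namespace OHara

/-- The spread of `a = (a_0, …, a_n)`: the maximum of `a_i + a_{i+1}` over `0 ≤ i ≤ n-1`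
(`0` if the list has length ≤ 1). -/
def sprL (a : List ℕ) : ℕ :=
  (Finset.range (a.length - 1)).sup (fun i => a.getD i 0 + a.getD (i + 1) 0)

/-- `M(a)`: the set of left indices of maximal pairs. -/
def Mset (a : List ℕ) : Finset ℕ :=
  (Finset.range (a.length - 1)).filter (fun i => a.getD i 0 + a.getD (i + 1) 0 = sprL a)

/-- The connected component (maximal interval of consecutive integers) of `i` inside `S`. -/
def compF (S : Finset ℕ) (i : ℕ) : Finset ℕ :=
  S.filter (fun j => Finset.Icc (min i j) (max i j) ⊆ S)

/-- The left endpoints of the maximal intervals of consecutive integers of `S`. -/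
def leftEnds (S : Finset ℕ) : Finset ℕ :=
  S.filter (fun i => i = 0 ∨ (i - 1) ∉ S)

/-- O'Hara's degree: the sum over the maximal intervals `D` of `M(a)` of `⌈|D|/2⌉`. -/
def ecdL (a : List ℕ) : ℕ :=
  ∑ i ∈ leftEnds (Mset a), ((compF (Mset a) i).card + 1) / 2

/-- The set of active indices `Act(a) = M(a) ∪ (1 + M(a))`. -/
def ActF (a : List ℕ) : Finset ℕ :=
  Mset a ∪ (Mset a).image (· + 1)

/-- An index `j` survives in `ω(a)` iff it is not active, or it is the left endpoint `c` of a
maximal interval `D = [c, c+d]` of `M(a)` with `d` odd (i.e. `|D|` even). -/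
def survivesB (a : List ℕ) (j : ℕ) : Bool :=
  decide (j ∉ ActF a ∨ (j ∈ leftEnds (Mset a) ∧ Even (compF (Mset a) j).card))

/-- `ω(a)`: the result of removing from `a` the largest possible number of maximal pairs. -/
def omegaL (a : List ℕ) : List ℕ :=
  ((List.range a.length).filter (fun j => survivesB a j)).map (fun j => a.getD j 0)

/-- Fuel-driven recursion computing the signature (the fuel `a.length` in `sigmaL`
always suffices, since `ω` shortens a list of length ≥ 3 by at least 2). -/
def sigmaAux : ℕ → List ℕ → List ℕ
  | _, [] => []
  | 0, a => [a.sum]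
  | fuel + 1, a =>
    if a.length ≤ 2 then [a.sum]
    else List.replicate (ecdL a - 1) 0 ++ [sprL a - sprL (omegaL a)] ++ sigmaAux fuel (omegaL a)

/-- The signature `σ(a)`. -/
def sigmaL (a : List ℕ) : List ℕ := sigmaAux a.length a

/-- `m = Σ_{j=0}^k (j+1)·d_j` determined by a signature `(d_0, …, d_k)`. -/
def mOf (ds : List ℕ) : ℕ := ∑ j ∈ Finset.range ds.length, (j + 1) * ds.getD j 0

/-- `Q_n(d_0, …, d_k)`: the set of elements of `A_n(m)` of signature `(d_0, …, d_k)`. -/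
def Qset (n : ℕ) (ds : List ℕ) : Set (List ℕ) :=
  {a | a.length = n + 1 ∧ a.sum = mOf ds ∧ sigmaL a = ds}

/-- The rank `rk(a) = Σ i·a_i`. -/
def rkL (a : List ℕ) : ℕ := ∑ i ∈ Finset.range a.length, i * a.getD i 0

/-- `b` covers `a` in `A_n(m)`: `b` is obtained from `a` by replacing some consecutive pair
`(a_i, a_{i+1})` by `(a_i - 1, a_{i+1} + 1)`. -/
def coversL (b a : List ℕ) : Prop :=
  ∃ i, i + 1 < a.length ∧ 0 < a.getD i 0 ∧
    b = (a.set i (a.getD i 0 - 1)).set (i + 1) (a.getD (i + 1) 0 + 1)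

/-- Normalization phase of the raising algorithm: starting at index `i ∈ M(a)`, repeatedly
replace `i` by `i - 1` as long as `i ≥ 1` and `a_{i+1} = a_{i-1}`. -/
def rnormIdx (a : List ℕ) : ℕ → ℕ
  | 0 => 0
  | i + 1 => if a.getD (i + 2) 0 = a.getD i 0 then rnormIdx a i else i + 1

/-- One move of the raising algorithm from `(a, i)` with `i ∈ M(a)`: after normalizing the
index, either halt (`none`, at an initial element) or perform one step. -/
def raiseMove (a : List ℕ) (i : ℕ) : Option (List ℕ × ℕ) :=
  let j := rnormIdx a i
  if a.getD (j + 1) 0 = 0 then none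
  else some ((a.set j (a.getD j 0 + 1)).set (j + 1) (a.getD (j + 1) 0 - 1), j)

/-- The list of elements produced by iterating the raising algorithm (including the start). -/
def raiseList : ℕ → List ℕ → ℕ → List (List ℕ)
  | 0, a, _ => [a]
  | fuel + 1, a, i =>
    match raiseMove a i with
    | none => [a]
    | some (a', j) => a :: raiseList fuel a' j

/-- Normalization phase of the lowering algorithm: starting at index `i ∈ M(a)`, repeatedly
replace `i` by `i + 1` as long as `i ≤ n - 2` and `a_i = a_{i+2}` (fuel-driven). -/
def lnormIdx (a : List ℕ) : ℕ → ℕ → ℕ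
  | 0, i => i
  | fuel + 1, i =>
    if i + 2 < a.length ∧ a.getD i 0 = a.getD (i + 2) 0 then lnormIdx a fuel (i + 1) else i

/-- One move of the lowering algorithm from `(a, i)` with `i ∈ M(a)`: after normalizing the
index, either halt (`none`, at a terminal element) or perform one step. -/
def lowerMove (a : List ℕ) (i : ℕ) : Option (List ℕ × ℕ) :=
  let j := lnormIdx a a.length i
  if a.getD j 0 = 0 then none
  else some ((a.set j (a.getD j 0 - 1)).set (j + 1) (a.getD (j + 1) 0 + 1), j)

/-- The list of elements produced by iterating the lowering algorithm (including the start). -/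
def lowerList : ℕ → List ℕ → ℕ → List (List ℕ)
  | 0, a, _ => [a]
  | fuel + 1, a, i =>
    match lowerMove a i with
    | none => [a]
    | some (a', j) => a :: lowerList fuel a' j

/-- The colors of the successive covering relations produced by the lowering algorithm:
a lowering step at index `j` replaces `(a_j, a_{j+1})` by `(a_j - 1, a_{j+1} + 1)` and has
color `j + 1`. -/
def lowerColors : ℕ → List ℕ → ℕ → List ℕ
  | 0, _, _ => []
  | fuel + 1, a, i =>
    match lowerMove a i with
    | none => []
    | some (a', j) => (j + 1) :: lowerColors fuel a' j

/-- The transversal chain `T_i(a)`: the elements obtained from `a` by the raising algorithm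
together with those obtained by the lowering algorithm, both started at index `i ∈ M(a)`.
(The fuels `rk(a)` and `a.length * a.sum` are always sufficient, since each raising move
decreases the rank by 1 and each lowering move increases it by 1, within `[0, n·m]`.) -/
def Tset (a : List ℕ) (i : ℕ) : Set (List ℕ) :=
  {x | x ∈ raiseList (rkL a) a i ∨ x ∈ lowerList (a.length * a.sum) a i}

end OHara

/-!
Let `s` be the spread of `a`. An index `i ∈ M(a)` exhibits `a` as a list `b` with an adjacent pair
of sum `s` inserted at `i`. A step of the raising or lowering algorithm slides this pair or shifts
a unit inside it, so `T_i(a)` consists of such insertions into the same `b`.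

The tuple `ω(a)` is what remains after cancelling adjacent pairs of sum `s` as long as possible.
This normal form does not depend on the order of cancellation, so all insertions into `b` have the
same `ω`; they also have the same length, sum and spread, hence the same signature.

The rank maps `T_i(a)` bijectively onto an interval, from the rank of `(s, 0, b)` to that of
`(b, 0, s)`. If `b` has length `n - 1`, this interval has length `n * s - 2 * ∑ b`. On
`Q_n(d_0,…,d_k)` the spread is `s = ∑ d_j`, and the length becomes `∑ (n - 2 * j) * d_j`.
-/

namespace OHara

section Rank

lemma sum_range_getD {M : Type*} [AddCommMonoid M] (l : List M) :
    ∑ i ∈ Finset.range l.length, l.getD i 0 = l.sum := by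
  rw [Finset.sum_range, ← Fin.sum_univ_getElem]
  simp

lemma rkL_cons (x : ℕ) (l : List ℕ) : rkL (x :: l) = rkL l + l.sum := by
  simp [rkL, Finset.sum_range_succ', ← sum_range_getD l, ← Finset.sum_add_distrib, add_one_mul]

lemma rkL_append (u v : List ℕ) : rkL (u ++ v) = rkL u + rkL v + u.length * v.sum := by
  induction u with
  | nil => simp [rkL]
  | cons x u ih =>
    simp only [List.cons_append, rkL_cons, ih, List.sum_append, List.length_cons]
    ring

lemma rkL_append_pair (u v : List ℕ) (x y : ℕ) :
    rkL (u ++ x :: y :: v) = rkL (u ++ v) + 2 * v.sum + y + u.length * (x + y) := by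
  simp only [rkL_append, rkL_cons, List.sum_cons]
  ring

lemma rkL_le_length_mul_sum (a : List ℕ) : rkL a ≤ a.length * a.sum := by
  induction a with
  | nil => simp [rkL]
  | cons x l ih =>
    simp only [rkL_cons, List.length_cons, List.sum_cons]
    nlinarith

lemma mOf_eq_rkL_add_sum (ds : List ℕ) : mOf ds = rkL ds + ds.sum := by
  simp [mOf, rkL, ← sum_range_getD ds, ← Finset.sum_add_distrib, add_one_mul]

lemma mOf_replicate_append (r d : ℕ) (l : List ℕ) :
    mOf (List.replicate r 0 ++ [d] ++ l) = (r + 1) * d + mOf l + (r + 1) * l.sum := by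
  have hzero : rkL (List.replicate r 0) = 0 := by
    simpa using rkL_le_length_mul_sum (List.replicate r 0)
  have hsingle : rkL [d] = 0 := by simp [rkL]
  simp only [mOf_eq_rkL_add_sum, rkL_append, hzero, List.sum_append, List.sum_cons,
    List.sum_nil, List.sum_replicate, List.length_append, List.length_replicate,
    List.length_singleton, hsingle, smul_zero]
  ring

lemma sum_weights_add_two_mul_mOf (n : ℕ) (ds : List ℕ) (hds : ds.length ≤ n / 2 + 1) :
    (∑ j ∈ Finset.range ds.length, (n - 2 * j) * ds.getD j 0) + 2 * mOf ds =
      (n + 2) * ds.sum := by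
  rw [mOf, ← sum_range_getD ds, Finset.mul_sum, Finset.mul_sum, ← Finset.sum_add_distrib]
  refine Finset.sum_congr rfl fun j hj => ?_
  have hj : 2 * j ≤ n := by have := Finset.mem_range.1 hj; omega
  rw [← mul_assoc, ← add_mul]
  congr 1
  omega

end Rank

section PairSums

variable {s x y : ℕ} {l u v : List ℕ}

/-- All pairs of adjacent entries of `l` have sum at most `s`. -/
abbrev PairSumsLE (s : ℕ) (l : List ℕ) : Prop := l.IsChain fun x y => x + y ≤ s

lemma pairSumsLE_iff_sprL_le : PairSumsLE s l ↔ sprL l ≤ s := by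
  simp only [sprL, List.isChain_iff_getElem, Finset.sup_le_iff, Finset.mem_range]
  refine forall_congr' fun i => ⟨fun h hi => ?_, fun h hi => ?_⟩
  · rw [List.getD_eq_getElem _ _ (by omega), List.getD_eq_getElem _ _ (by omega)]
    exact h (by omega)
  · have := h (by omega)
    rwa [List.getD_eq_getElem _ _ (by omega), List.getD_eq_getElem _ _ (by omega)] at this

lemma pairSumsLE_sprL (l : List ℕ) : PairSumsLE (sprL l) l := pairSumsLE_iff_sprL_le.2 le_rfl

lemma pairSumsLE_append_pair_iff (hxy : x + y = s) :
    PairSumsLE s (u ++ x :: y :: v) ↔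
      PairSumsLE s u ∧ PairSumsLE s v ∧ (∀ w ∈ u.getLast?, w ≤ y) ∧ ∀ z ∈ v.head?, z ≤ x := by
  have hleft (w : ℕ) : w + x ≤ s ↔ w ≤ y := by omega
  have hright (z : ℕ) : y + z ≤ s ↔ z ≤ x := by omega
  simp only [PairSumsLE, List.isChain_append, List.isChain_cons, List.head?_cons,
    Option.mem_some_iff, forall_eq', hxy, hleft, hright, le_refl]
  tauto

lemma two_mul_sum_add_le (hy : y ≤ s) (h : PairSumsLE s (y :: v)) :
    2 * v.sum + y ≤ (v.length + 1) * s := by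
  induction v generalizing y with
  | nil => simpa
  | cons z v ih =>
    obtain ⟨hyz, hz⟩ := List.isChain_cons_cons.1 h
    have := ih (by omega) hz
    simp only [List.sum_cons, List.length_cons, add_one_mul] at this ⊢
    omega

end PairSums

section Reduction

variable {s x y : ℕ} {l : List ℕ}

/-- Prepend `x` to `w`, cancelling `x` against the head of `w` if these two have sum `s`. -/
def cancelCons (s x : ℕ) : List ℕ → List ℕ
  | [] => [x]
  | y :: w => if x + y = s then w else x :: y :: w

/-- The normal form of a list of naturals under deletion of adjacent pairs of sum `s`. The rewriting
is confluent, like free reduction with the involution `x ↦ s - x` as inversion. -/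
def reduce (s : ℕ) (l : List ℕ) : List ℕ := l.foldr (cancelCons s) []

/-- `l` is a normal form: no pair of adjacent entries has sum `s`. -/
abbrev IsReduced (s : ℕ) (l : List ℕ) : Prop := l.IsChain fun x y => x + y ≠ s

@[simp] lemma reduce_nil : reduce s [] = [] := rfl

@[simp] lemma reduce_cons : reduce s (x :: l) = cancelCons s x (reduce s l) := rfl

lemma IsReduced.cancelCons (h : IsReduced s l) : IsReduced s (cancelCons s x l) := by
  cases l with
  | nil => simp [OHara.cancelCons]
  | cons y l =>
    rw [OHara.cancelCons]
    split_ifs with hxy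
    · exact h.tail
    · exact List.isChain_cons_cons.2 ⟨hxy, h⟩

lemma isReduced_reduce (s : ℕ) (l : List ℕ) : IsReduced s (reduce s l) := by
  induction l with
  | nil => simp
  | cons x l ih => exact ih.cancelCons

lemma cancelCons_of_isReduced_cons (h : IsReduced s (x :: l)) : cancelCons s x l = x :: l := by
  cases l with
  | nil => rfl
  | cons y l => rw [cancelCons, if_neg (List.isChain_cons_cons.1 h).1]

lemma cancelCons_cancelCons (hxy : x + y = s) (h : IsReduced s l) :
    cancelCons s x (cancelCons s y l) = l := by
  cases l with
  | nil => simp [cancelCons, hxy]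
  | cons z l =>
    by_cases hyz : y + z = s
    · obtain rfl : x = z := by omega
      rw [cancelCons, if_pos hyz, cancelCons_of_isReduced_cons h]
    · simp [cancelCons, hxy, hyz]

lemma reduce_append_pair (hxy : x + y = s) (u v : List ℕ) :
    reduce s (u ++ x :: y :: v) = reduce s (u ++ v) := by
  induction u with
  | nil => exact cancelCons_cancelCons hxy (isReduced_reduce s v)
  | cons w u ih => simp [ih]

lemma length_reduce_le (s : ℕ) (l : List ℕ) : (reduce s l).length ≤ l.length := by
  induction l with
  | nil => simp
  | cons x l ih =>
    rw [reduce_cons]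
    cases h : reduce s l with
    | nil => simp [cancelCons]
    | cons y w =>
      rw [cancelCons]
      split_ifs <;> grind

-- Every cancellation removes two entries and sum `s`; doubled to avoid counting cancellations.
lemma two_mul_sum_add_length_reduce (s : ℕ) (l : List ℕ) :
    2 * l.sum + (reduce s l).length * s = 2 * (reduce s l).sum + l.length * s := by
  induction l with
  | nil => simp
  | cons x l ih =>
    rw [reduce_cons]
    cases h : reduce s l with
    | nil =>
      simp only [h, cancelCons, List.sum_cons, List.sum_nil, List.length_cons, List.length_nil] at *
      linarith
    | cons y w =>
      rw [cancelCons]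
      split_ifs with hxy <;> simp only [h, List.sum_cons, List.length_cons] at * <;> nlinarith

lemma PairSumsLE.of_cons_cancelCons (h : PairSumsLE s (x :: l)) :
    PairSumsLE s (cancelCons s x l) := by
  cases l with
  | nil => simp [cancelCons]
  | cons y l =>
    rw [cancelCons]
    split_ifs
    exacts [h.tail.tail, h]

lemma PairSumsLE.cons_cancelCons (hxy : x + y ≤ s) (h : PairSumsLE s (y :: l)) :
    PairSumsLE s (x :: cancelCons s y l) := by
  rcases l with - | ⟨z, - | ⟨z', l⟩⟩ <;> simp only [cancelCons] <;> grind

lemma PairSumsLE.cons_reduce (h : PairSumsLE s (x :: l)) : PairSumsLE s (x :: reduce s l) := by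
  induction l generalizing x with
  | nil => simp
  | cons y l ih =>
    obtain ⟨hxy, hy⟩ := List.isChain_cons_cons.1 h
    exact PairSumsLE.cons_cancelCons hxy (ih hy)

lemma PairSumsLE.reduce (h : PairSumsLE s l) : PairSumsLE s (reduce s l) := by
  cases l with
  | nil => simp
  | cons x l => exact h.cons_reduce.of_cons_cancelCons

lemma cancelCons_of_add_lt (hxy : x + y < s) (h : PairSumsLE s (y :: l)) :
    cancelCons s x (cancelCons s y l) = x :: cancelCons s y l := by
  rcases l with - | ⟨z, - | ⟨z', l⟩⟩ <;> simp only [cancelCons] <;> grind [cancelCons]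

end Reduction

section Survivors

variable {s x y : ℕ} {l : List ℕ}

/-- The left indices of the adjacent pairs of `l` of sum `s`, so that `Mset l` is
`tightIndices (sprL l) l`. Unlike for `Mset`, the sum `s` does not change when passing to a tail of
the list. -/
def tightIndices (s : ℕ) (l : List ℕ) : Finset ℕ :=
  {i ∈ Finset.range (l.length - 1) | l.getD i 0 + l.getD (i + 1) 0 = s}

/-- The length of the run of consecutive indices of `tightIndices s l` that starts at `0`. -/
def runLength (s : ℕ) : List ℕ → ℕ
  | [] => 0
  | [_] => 0
  | x :: y :: l => if x + y = s then runLength s (y :: l) + 1 else 0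

/-- The entries of `l` that survive in `ω` when `l` follows the entry `w`: those starting a
(possibly empty) run of tight pairs of even length. -/
def survivors (s w : ℕ) : List ℕ → List ℕ
  | [] => []
  | x :: l =>
    if w + x ≠ s ∧ Even (runLength s (x :: l)) then x :: survivors s x l else survivors s x l

lemma mem_tightIndices {i : ℕ} :
    i ∈ tightIndices s l ↔ i + 1 < l.length ∧ l.getD i 0 + l.getD (i + 1) 0 = s := by
  rw [tightIndices, Finset.mem_filter, Finset.mem_range]
  exact and_congr_left' (by omega)

lemma zero_mem_tightIndices : 0 ∈ tightIndices s (x :: y :: l) ↔ x + y = s := by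
  simp [mem_tightIndices]

lemma succ_mem_tightIndices_cons {i : ℕ} :
    i + 1 ∈ tightIndices s (x :: l) ↔ i ∈ tightIndices s l := by
  simp [mem_tightIndices]

lemma mem_tightIndices_drop {i j : ℕ} :
    i ∈ tightIndices s (l.drop j) ↔ j + i ∈ tightIndices s l := by
  simp only [mem_tightIndices, List.length_drop, List.getD_eq_getElem?_getD, List.getElem?_drop,
    add_assoc]
  exact and_congr_left' (by omega)

-- No entry forms a tight pair with `s + 1`, so it can be put in front of a list as a sentinel.
lemma mem_tightIndices_sentinel_cons {i : ℕ} :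
    i ∈ tightIndices s ((s + 1) :: l) ↔ i ≠ 0 ∧ i - 1 ∈ tightIndices s l := by
  cases i with
  | zero => simpa [mem_tightIndices] using fun _ => by omega
  | succ i => simp [succ_mem_tightIndices_cons]

lemma lt_runLength_iff {k : ℕ} : k < runLength s l ↔ ∀ i ≤ k, i ∈ tightIndices s l := by
  induction l generalizing k with
  | nil => simpa [runLength, mem_tightIndices] using ⟨0, by omega⟩
  | cons x l ih =>
    cases l with
    | nil => simpa [runLength, mem_tightIndices] using ⟨0, by omega⟩
    | cons y l =>
      rw [runLength]
      split_ifs with hxy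
      · have h0 := zero_mem_tightIndices (l := l).2 hxy
        cases k with
        | zero => simpa using h0
        | succ k =>
          rw [Nat.add_lt_add_iff_right, ih]
          refine ⟨fun h i hi => ?_, fun h i hi => succ_mem_tightIndices_cons.1 (h _ (by omega))⟩
          cases i with
          | zero => exact h0
          | succ i => exact succ_mem_tightIndices_cons.2 (h i (by omega))
      · exact iff_of_false (by simp) fun h => hxy (zero_mem_tightIndices.1 (h 0 (by omega)))

lemma compF_tightIndices {j : ℕ} (hj : j ∈ leftEnds (tightIndices s l)) :
    compF (tightIndices s l) j = Finset.Ico j (j + runLength s (l.drop j)) := by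
  obtain ⟨-, hleft⟩ := Finset.mem_filter.1 hj
  ext t
  rw [compF, Finset.mem_filter, Finset.mem_Ico]
  constructor
  · rintro ⟨-, hsub⟩
    have hjt : j ≤ t := by
      by_contra! htj
      exact hleft.elim (by omega) fun h => h (hsub (Finset.mem_Icc.2 (by omega)))
    refine ⟨hjt, ?_⟩
    have : t - j < runLength s (l.drop j) := lt_runLength_iff.2 fun i hi =>
      mem_tightIndices_drop.2 (hsub (Finset.mem_Icc.2 (by omega)))
    omega
  · rintro ⟨hjt, ht⟩
    have hrun := lt_runLength_iff.1 (show t - j < runLength s (l.drop j) by omega)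
    have htight (i : ℕ) (hji : j ≤ i) (hit : i ≤ t) : i ∈ tightIndices s l := by
      simpa [mem_tightIndices_drop, hji] using hrun (i - j) (by omega)
    refine ⟨htight t hjt le_rfl, fun i hi => ?_⟩
    rw [Finset.mem_Icc, min_eq_left hjt, max_eq_right hjt] at hi
    exact htight i hi.1 hi.2

lemma runLength_drop_eq_zero_iff {j : ℕ} :
    runLength s (l.drop j) = 0 ↔ j ∉ tightIndices s l := by
  simpa [mem_tightIndices_drop] using (lt_runLength_iff (s := s) (l := l.drop j) (k := 0)).not

lemma mem_leftEnds_tightIndices {j : ℕ} :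
    j ∈ leftEnds (tightIndices s l) ↔
      j ∈ tightIndices s l ∧ j ∉ tightIndices s ((s + 1) :: l) := by
  rw [leftEnds, Finset.mem_filter, mem_tightIndices_sentinel_cons]
  tauto

lemma survivesB_iff (a : List ℕ) (j : ℕ) :
    survivesB a j = true ↔ j ∉ tightIndices (sprL a) ((sprL a + 1) :: a) ∧
      Even (runLength (sprL a) (a.drop j)) := by
  have hM : Mset a = tightIndices (sprL a) a := rfl
  have hAct : j ∈ ActF a ↔
      j ∈ Mset a ∨ j ∈ tightIndices (sprL a) ((sprL a + 1) :: a) := by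
    simp only [ActF, Finset.mem_union, Finset.mem_image, mem_tightIndices_sentinel_cons]
    refine or_congr_right ⟨?_, fun ⟨h0, h⟩ => ⟨j - 1, h, by omega⟩⟩
    rintro ⟨i, hi, rfl⟩
    exact ⟨by omega, by simpa⟩
  have hleft : j ∈ leftEnds (Mset a) ↔
      j ∈ Mset a ∧ j ∉ tightIndices (sprL a) ((sprL a + 1) :: a) :=
    mem_leftEnds_tightIndices
  rw [survivesB, decide_eq_true_iff, hAct]
  by_cases hj : j ∈ Mset a
  · have hcard : j ∈ leftEnds (Mset a) →
        (compF (Mset a) j).card = runLength (sprL a) (a.drop j) := fun h => by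
      rw [hM, compF_tightIndices h, Nat.card_Ico, Nat.add_sub_cancel_left]
    grind
  · have := (runLength_drop_eq_zero_iff (s := sprL a)).2 hj
    simp [hleft, hj, this]

lemma map_filter_range_eq_survivors (s w : ℕ) (l : List ℕ) :
    ((List.range l.length).filter fun j =>
        decide (j ∉ tightIndices s (w :: l) ∧ Even (runLength s (l.drop j)))).map
      (fun j => l.getD j 0) = survivors s w l := by
  induction l generalizing w with
  | nil => rfl
  | cons x l ih =>
    rw [List.length_cons, List.range_succ_eq_map, List.filter_cons, List.filter_map, survivors,
      ← ih x]
    simp only [Function.comp_def, Nat.succ_eq_add_one, succ_mem_tightIndices_cons,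
      List.drop_succ_cons, List.drop_zero, decide_eq_true_iff, zero_mem_tightIndices, ne_eq]
    split_ifs <;> simp

lemma omegaL_eq_survivors (a : List ℕ) : omegaL a = survivors (sprL a) (sprL a + 1) a := by
  rw [omegaL, ← map_filter_range_eq_survivors]
  congr 2
  funext j
  rw [Bool.eq_iff_iff, survivesB_iff, decide_eq_true_iff]

lemma ecdL_eq_sum (a : List ℕ) :
    ecdL a = ∑ j ∈ Finset.range a.length, if j ∈ tightIndices (sprL a) ((sprL a + 1) :: a) then 0
      else (runLength (sprL a) (a.drop j) + 1) / 2 := by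
  have hM : Mset a = tightIndices (sprL a) a := rfl
  rw [ecdL, hM]
  refine Finset.sum_subset_zero_on_sdiff (fun j hj => ?_) (fun j hj => ?_) (fun j hj => ?_)
  · have := (mem_tightIndices.1 (mem_leftEnds_tightIndices.1 hj).1).1
    exact Finset.mem_range.2 (by omega)
  · have hj := (Finset.mem_sdiff.1 hj).2
    rw [mem_leftEnds_tightIndices, not_and, not_not] at hj
    split_ifs with hprev
    · rfl
    · simp [runLength_drop_eq_zero_iff.2 fun h => hprev (hj h)]
  · rw [if_neg (mem_leftEnds_tightIndices.1 hj).2, compF_tightIndices hj, Nat.card_Ico,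
      Nat.add_sub_cancel_left]

-- A maximal run of `r` tight pairs covers `r + 1` entries and leaves a survivor iff `r` is even.
lemma two_mul_sum_runLength_add_length_survivors (s w : ℕ) (l : List ℕ) :
    2 * (∑ j ∈ Finset.range l.length, if j ∈ tightIndices s (w :: l) then 0
      else (runLength s (l.drop j) + 1) / 2) + (survivors s w l).length + runLength s (w :: l) =
        l.length := by
  induction l generalizing w with
  | nil => rfl
  | cons x l ih =>
    have ih := ih x
    rw [List.length_cons, Finset.sum_range_succ', survivors, runLength]
    simp only [succ_mem_tightIndices_cons, zero_mem_tightIndices, List.drop_succ_cons,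
      List.drop_zero]
    grind

lemma two_mul_ecdL_add_length_omegaL (a : List ℕ) :
    2 * ecdL a + (omegaL a).length = a.length := by
  have hrun : runLength (sprL a) ((sprL a + 1) :: a) = 0 := by
    simpa [mem_tightIndices_sentinel_cons] using
      runLength_drop_eq_zero_iff (s := sprL a) (l := (sprL a + 1) :: a) (j := 0)
  rw [ecdL_eq_sum, omegaL_eq_survivors]
  simpa [hrun] using two_mul_sum_runLength_add_length_survivors (sprL a) (sprL a + 1) a

-- The second clause of the odd case feeds the next even case, where `w` is prepended.
lemma reduce_cons_of_runLength (h : PairSumsLE s (x :: l)) :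
    (Even (runLength s (x :: l)) → reduce s (x :: l) = x :: survivors s x l) ∧
    (¬ Even (runLength s (x :: l)) → reduce s (x :: l) = survivors s x l ∧
      ∀ w, w + x = s → IsReduced s (w :: survivors s x l)) := by
  induction l generalizing x with
  | nil => simp [runLength, survivors, cancelCons]
  | cons y l ih =>
    obtain ⟨hxy, hy⟩ := List.isChain_cons_cons.1 h
    obtain ⟨heven, hodd⟩ := ih hy
    rw [reduce_cons, runLength, survivors]
    by_cases hs : x + y = s
    · simp only [hs, if_true, ne_eq, not_true_eq_false, false_and, if_false, Nat.even_add_one,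
        not_not]
      refine ⟨fun hrun => ?_, fun hrun => ?_⟩
      · rw [(hodd hrun).1, cancelCons_of_isReduced_cons ((hodd hrun).2 x hs)]
      · rw [heven hrun]
        refine ⟨by rw [cancelCons, if_pos hs], fun w hw => ?_⟩
        obtain rfl : w = y := by omega
        exact heven hrun ▸ isReduced_reduce s (w :: l)
    · have hpush : reduce s (y :: l) =
          if Even (runLength s (y :: l)) then y :: survivors s y l else survivors s y l := by
        split_ifs with hrun
        exacts [heven hrun, (hodd hrun).1]
      have hlt : cancelCons s x (reduce s (y :: l)) = x :: reduce s (y :: l) :=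
        cancelCons_of_add_lt (lt_of_le_of_ne hxy hs) (PairSumsLE.cons_reduce hy)
      simp only [hs, if_false, Even.zero, not_true_eq_false, ne_eq, not_false_eq_true, true_and,
        IsEmpty.forall_iff, and_true, forall_const, ← hpush, hlt]

lemma omegaL_eq_reduce (a : List ℕ) : omegaL a = reduce (sprL a) a := by
  rw [omegaL_eq_survivors]
  cases a with
  | nil => rfl
  | cons x l =>
    obtain ⟨heven, hodd⟩ := reduce_cons_of_runLength (pairSumsLE_sprL (x :: l))
    rw [survivors]
    split_ifs with h
    · exact (heven h.2).symm
    · exact (hodd fun hrun => h ⟨by omega, hrun⟩).1.symm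

end Survivors

section Insertion

variable {s i : ℕ} {a b : List ℕ}

/-- `a` arises from `b` by inserting at the index `i` a pair of adjacent entries of sum `s`, and no
two adjacent entries of `a` have a larger sum. -/
def IsInsertion (s : ℕ) (b a : List ℕ) (i : ℕ) : Prop :=
  ∃ u x y v, a = u ++ x :: y :: v ∧ b = u ++ v ∧ u.length = i ∧ x + y = s ∧ PairSumsLE s a

lemma exists_isInsertion_of_mem_Mset (hi : i ∈ Mset a) : ∃ b, IsInsertion (sprL a) b a i := by
  obtain ⟨hlt, hsum⟩ : i + 1 < a.length ∧ a.getD i 0 + a.getD (i + 1) 0 = sprL a :=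
    mem_tightIndices.1 hi
  rw [List.getD_eq_getElem _ _ (by omega), List.getD_eq_getElem _ _ hlt] at hsum
  refine ⟨a.take i ++ a.drop (i + 2), a.take i, a[i], a[i + 1], a.drop (i + 2), ?_, rfl,
    by simp; omega, hsum, pairSumsLE_sprL a⟩
  simp

lemma exists_mem_Mset (ha : 2 ≤ a.length) : ∃ i, i ∈ Mset a := by
  have hne : (Finset.range (a.length - 1)).Nonempty := Finset.nonempty_range_iff.2 (by omega)
  obtain ⟨i, hi, hmax⟩ := Finset.exists_mem_eq_sup _ hne fun i => a.getD i 0 + a.getD (i + 1) 0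
  exact ⟨i, Finset.mem_filter.2 ⟨hi, hmax.symm⟩⟩

namespace IsInsertion

lemma pairSumsLE (h : IsInsertion s b a i) : PairSumsLE s a := by
  obtain ⟨-, -, -, -, -, -, -, -, h⟩ := h
  exact h

lemma sprL_eq (h : IsInsertion s b a i) : sprL a = s := by
  obtain ⟨u, x, y, v, rfl, -, -, rfl, hle⟩ := h
  refine le_antisymm (pairSumsLE_iff_sprL_le.1 hle) ?_
  have := pairSumsLE_sprL (u ++ x :: y :: v)
  simp only [PairSumsLE, List.isChain_append, List.isChain_cons_cons] at this
  exact this.2.1.1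

lemma length_eq (h : IsInsertion s b a i) : a.length = b.length + 2 := by
  obtain ⟨u, x, y, v, rfl, rfl, -⟩ := h
  simp [add_assoc]

lemma sum_eq (h : IsInsertion s b a i) : a.sum = b.sum + s := by
  obtain ⟨u, x, y, v, rfl, rfl, -, rfl, -⟩ := h
  simp only [List.sum_append, List.sum_cons]
  ring

lemma omegaL_eq (h : IsInsertion s b a i) : omegaL a = reduce s b := by
  rw [omegaL_eq_reduce, h.sprL_eq]
  obtain ⟨u, x, y, v, rfl, rfl, -, hxy, -⟩ := h
  exact reduce_append_pair hxy u v

lemma le_rkL (h : IsInsertion s b a i) : rkL b + 2 * b.sum ≤ rkL a := by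
  obtain ⟨u, x, y, v, rfl, rfl, -, rfl, hle⟩ := h
  have hu : PairSumsLE (x + y) (x :: u.reverse) := by
    rw [← List.reverse_concat', PairSumsLE, List.isChain_reverse]
    simpa only [add_comm] using (List.isChain_split.1 hle).1
  have := two_mul_sum_add_le (by omega) hu
  simp only [rkL_append_pair, List.sum_append, List.sum_reverse, List.length_reverse,
    add_one_mul] at this ⊢
  omega

lemma rkL_le (h : IsInsertion s b a i) : rkL a ≤ rkL b + (b.length + 1) * s := by
  obtain ⟨u, x, y, v, rfl, rfl, -, rfl, hle⟩ := h
  have := two_mul_sum_add_le (by omega) (List.isChain_append.1 hle).2.1.tail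
  simp only [rkL_append_pair, List.length_append]
  linarith

end IsInsertion

lemma ecdL_pos (ha : 2 ≤ a.length) : 0 < ecdL a := by
  obtain ⟨i, hi⟩ := exists_mem_Mset ha
  obtain ⟨b, hb⟩ := exists_isInsertion_of_mem_Mset hi
  have := two_mul_ecdL_add_length_omegaL a
  have := hb.length_eq
  have := length_reduce_le (sprL a) b
  rw [← hb.omegaL_eq] at this
  omega

lemma sum_eq_ecdL_mul_sprL_add_sum_omegaL (a : List ℕ) :
    a.sum = ecdL a * sprL a + (omegaL a).sum := by
  have hsum := two_mul_sum_add_length_reduce (sprL a) a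
  have hlength := congrArg (· * sprL a) (two_mul_ecdL_add_length_omegaL a)
  simp only [← omegaL_eq_reduce] at hsum hlength
  linarith

lemma sprL_omegaL_le (a : List ℕ) : sprL (omegaL a) ≤ sprL a := by
  rw [omegaL_eq_reduce, ← pairSumsLE_iff_sprL_le]
  exact PairSumsLE.reduce (pairSumsLE_sprL a)

end Insertion

section Signature

variable {n : ℕ} {a a' ds : List ℕ}

lemma length_omegaL_lt (ha : 2 ≤ a.length) : (omegaL a).length < a.length := by
  have := ecdL_pos ha
  have := two_mul_ecdL_add_length_omegaL a
  omega

lemma sigmaAux_succ_cons (f x : ℕ) (l : List ℕ) :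
    sigmaAux (f + 1) (x :: l) =
      if (x :: l).length ≤ 2 then [(x :: l).sum]
      else List.replicate (ecdL (x :: l) - 1) 0 ++ [sprL (x :: l) - sprL (omegaL (x :: l))] ++
        sigmaAux f (omegaL (x :: l)) :=
  rfl

lemma sigmaAux_eq_of_le {f g : ℕ} (hf : a.length ≤ f) (hfg : f ≤ g) :
    sigmaAux f a = sigmaAux g a := by
  induction f generalizing a g with
  | zero =>
    obtain rfl : a = [] := by simpa using hf
    simp [sigmaAux]
  | succ f ih =>
    obtain ⟨g, rfl⟩ : ∃ g', g = g' + 1 := ⟨g - 1, by omega⟩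
    cases a with
    | nil => simp [sigmaAux]
    | cons x l =>
      rw [sigmaAux_succ_cons, sigmaAux_succ_cons]
      split_ifs with hl
      · rfl
      · have := length_omegaL_lt (a := x :: l) (by omega)
        rw [ih (a := omegaL (x :: l)) (g := g) (by omega) (by omega)]

lemma sigmaL_of_length_le_two (hne : a ≠ []) (ha : a.length ≤ 2) : sigmaL a = [a.sum] := by
  obtain ⟨x, l, rfl⟩ := List.exists_cons_of_ne_nil hne
  simp_all [sigmaL, sigmaAux]

lemma sigmaL_of_two_lt_length (ha : 2 < a.length) :
    sigmaL a =
      List.replicate (ecdL a - 1) 0 ++ [sprL a - sprL (omegaL a)] ++ sigmaL (omegaL a) := by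
  have := length_omegaL_lt ha.le
  obtain ⟨x, l, rfl⟩ := List.exists_cons_of_length_pos (show 0 < a.length by omega)
  rw [sigmaL, sigmaL, List.length_cons, sigmaAux_succ_cons,
    if_neg ha.not_ge, sigmaAux_eq_of_le le_rfl (g := l.length) (by grind)]

lemma sigmaL_congr (hlength : a.length = a'.length) (hsum : a.sum = a'.sum)
    (hspr : sprL a = sprL a') (hω : omegaL a = omegaL a') : sigmaL a = sigmaL a' := by
  have := two_mul_ecdL_add_length_omegaL a
  have := two_mul_ecdL_add_length_omegaL a'
  have hecd : ecdL a = ecdL a' := by grind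
  by_cases ha : 2 < a.length
  · rw [sigmaL_of_two_lt_length ha, sigmaL_of_two_lt_length (a := a') (by omega), hecd, hspr, hω]
  · rcases eq_or_ne a [] with rfl | hne
    · rw [List.eq_nil_of_length_eq_zero hlength.symm]
    · have hne' : a' ≠ [] := by grind
      rw [sigmaL_of_length_le_two hne (by omega), sigmaL_of_length_le_two hne' (by omega), hsum]

lemma IsInsertion.sigmaL_eq {s i i' : ℕ} {b : List ℕ} (h : IsInsertion s b a i)
    (h' : IsInsertion s b a' i') : sigmaL a = sigmaL a' :=
  sigmaL_congr (h.length_eq.trans h'.length_eq.symm) (h.sum_eq.trans h'.sum_eq.symm)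
    (h.sprL_eq.trans h'.sprL_eq.symm) (h.omegaL_eq.trans h'.omegaL_eq.symm)

-- `sprL a = (sigmaL a).sum` can fail when `a.length` is odd, as the last `ω` may then be a single
-- entry, of spread `0`. It holds once `a.sum = mOf (sigmaL a)`, which is how `Qset` uses it.
lemma mOf_sigmaL_add_mul_sprL (a : List ℕ) :
    mOf (sigmaL a) + (a.length - 1) / 2 * sprL a =
      a.sum + (a.length - 1) / 2 * (sigmaL a).sum := by
  induction h : a.length using Nat.strong_induction_on generalizing a with
  | _ L ih =>
  subst h
  by_cases ha : 2 < a.length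
  · have hω := length_omegaL_lt ha.le
    have hlength := two_mul_ecdL_add_length_omegaL a
    obtain ⟨d, hd⟩ := Nat.exists_eq_add_of_le (sprL_omegaL_le a)
    have hr : ecdL a - 1 + 1 = ecdL a := Nat.sub_add_cancel (ecdL_pos ha.le)
    rw [sigmaL_of_two_lt_length ha, mOf_replicate_append, hr, hd, Nat.add_sub_cancel_left]
    have hsum := sum_eq_ecdL_mul_sprL_add_sum_omegaL a
    simp only [List.sum_append, List.sum_replicate, List.sum_singleton, smul_zero, zero_add]
    rcases eq_or_ne (omegaL a) [] with hnil | hnil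
    · have hspr : sprL [] = 0 := rfl
      simp [hsum, hd, hnil, hspr, sigmaL, sigmaAux, mOf]
    · have hk : (a.length - 1) / 2 = ecdL a + ((omegaL a).length - 1) / 2 := by
        have := List.length_pos_iff.2 hnil
        omega
      have := ih _ hω _ rfl
      rw [hk, hsum, hd]
      linarith
  · rcases eq_or_ne a [] with rfl | hne
    · simp [sigmaL, sigmaAux, mOf]
    · have hk : (a.length - 1) / 2 = 0 := by omega
      simp [sigmaL_of_length_le_two hne (by omega), hk, mOf]

lemma sprL_eq_sum_of_mem_Qset (hn : 1 ≤ n) (ha : a ∈ Qset n ds) : sprL a = ds.sum := by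
  obtain ⟨hlength, hsum, rfl⟩ := ha
  rcases hn.eq_or_lt with rfl | hn
  · obtain ⟨x, y, rfl⟩ := List.length_eq_two.1 hlength
    simp [sprL, sigmaL, sigmaAux]
  · have h := mOf_sigmaL_add_mul_sprL a
    rw [hsum, add_right_inj] at h
    exact Nat.eq_of_mul_eq_mul_left (by omega) h

end Signature

section Moves

variable {s i : ℕ} {a b : List ℕ}

lemma IsInsertion.exists_rnormIdx (h : IsInsertion s b a i) :
    ∃ u x y v, a = u ++ x :: y :: v ∧ b = u ++ v ∧ u.length = rnormIdx a i ∧ x + y = s ∧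
      ∀ w ∈ u.getLast?, w ≠ y := by
  induction i with
  | zero =>
    obtain ⟨u, x, y, v, ha, hb, hu, hxy, -⟩ := h
    obtain rfl := List.eq_nil_of_length_eq_zero hu
    exact ⟨[], x, y, v, ha, hb, rfl, hxy, by simp⟩
  | succ i ih =>
    obtain ⟨u, x, y, v, ha, hb, hu, hxy, hle⟩ := h
    obtain ⟨u, w, rfl⟩ := (List.eq_nil_or_concat' u).resolve_left (by rintro rfl; simp at hu)
    obtain rfl : u.length = i := by simpa using hu
    have hy : a.getD (u.length + 2) 0 = y := by simp [ha]
    have hw : a.getD u.length 0 = w := by simp [ha]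
    rw [rnormIdx, hy, hw]
    split_ifs with hyw
    · subst hyw
      exact ih ⟨u, y, x, y :: v, by simp [ha], by simp [hb], rfl, by omega, hle⟩
    · exact ⟨u ++ [w], x, y, v, ha, hb, hu, hxy, by simpa using Ne.symm hyw⟩

lemma IsInsertion.exists_lnormIdx {f : ℕ} (h : IsInsertion s b a i) (hf : a.length ≤ i + 2 + f) :
    ∃ u x y v, a = u ++ x :: y :: v ∧ b = u ++ v ∧ u.length = lnormIdx a f i ∧ x + y = s ∧
      ∀ z ∈ v.head?, z ≠ x := by
  induction f generalizing i with
  | zero =>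
    obtain ⟨u, x, y, v, ha, hb, hu, hxy, -⟩ := h
    obtain rfl : v = [] := List.eq_nil_of_length_eq_zero (by grind)
    exact ⟨u, x, y, [], ha, hb, hu, hxy, by simp⟩
  | succ f ih =>
    obtain ⟨u, x, y, v, ha, hb, rfl, hxy, hle⟩ := h
    cases v with
    | nil => exact ⟨u, x, y, [], ha, hb, by simp [lnormIdx, ha], hxy, by simp⟩
    | cons z v =>
      have hx : a.getD u.length 0 = x := by simp [ha]
      have hz : a.getD (u.length + 2) 0 = z := by simp [ha]
      rw [lnormIdx, hx, hz]
      split_ifs with hxz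
      · obtain ⟨-, rfl⟩ := hxz
        exact ih ⟨u ++ [x], y, x, v, by simp [ha], by simp [hb], by simp, by omega, hle⟩ (by omega)
      · exact ⟨u, x, y, z :: v, ha, hb, rfl, hxy, by grind⟩

lemma IsInsertion.raiseMove_cases (h : IsInsertion s b a i) :
    raiseMove a i = none ∧ rkL a = rkL b + 2 * b.sum ∨
      ∃ a' j, raiseMove a i = some (a', j) ∧ IsInsertion s b a' j ∧ rkL a = rkL a' + 1 := by
  have hle := h.pairSumsLE
  obtain ⟨u, x, y, v, rfl, rfl, hj, hxy, hlast⟩ := h.exists_rnormIdx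
  obtain ⟨hu, hv, hlast', hhead⟩ := (pairSumsLE_append_pair_iff hxy).1 hle
  have hlt (w) (hw : w ∈ u.getLast?) : w < y := lt_of_le_of_ne (hlast' w hw) (hlast w hw)
  have hx : (u ++ x :: y :: v).getD u.length 0 = x := by simp
  have hy : (u ++ x :: y :: v).getD (u.length + 1) 0 = y := by simp
  rw [raiseMove, ← hj, hx, hy]
  rcases Nat.eq_zero_or_pos y with rfl | hpos
  · obtain rfl : u = [] := by
      rw [← List.getLast?_eq_none_iff, Option.eq_none_iff_forall_not_mem]
      exact fun w hw => (hlt w hw).not_ge (Nat.zero_le w)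
    simp [rkL_cons, two_mul, add_assoc]
  · simp only [hpos.ne', if_false]
    refine .inr ⟨u ++ (x + 1) :: (y - 1) :: v, u.length, by simp,
      ⟨u, x + 1, y - 1, v, rfl, rfl, rfl, by omega, ?_⟩, ?_⟩
    · exact (pairSumsLE_append_pair_iff (by omega)).2 ⟨hu, hv,
        fun w hw => Nat.le_sub_one_of_lt (hlt w hw), fun z hz => (hhead z hz).trans x.le_succ⟩
    · rw [rkL_append_pair, rkL_append_pair, show x + 1 + (y - 1) = x + y by omega]
      omega

lemma IsInsertion.lowerMove_cases (h : IsInsertion s b a i) :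
    lowerMove a i = none ∧ rkL a = rkL b + (b.length + 1) * s ∨
      ∃ a' j, lowerMove a i = some (a', j) ∧ IsInsertion s b a' j ∧ rkL a' = rkL a + 1 := by
  have hle := h.pairSumsLE
  obtain ⟨u, x, y, v, rfl, rfl, hj, hxy, hhead⟩ := h.exists_lnormIdx (f := a.length) (by omega)
  obtain ⟨hu, hv, hlast, hhead'⟩ := (pairSumsLE_append_pair_iff hxy).1 hle
  have hlt (z) (hz : z ∈ v.head?) : z < x := lt_of_le_of_ne (hhead' z hz) (hhead z hz)
  have hx : (u ++ x :: y :: v).getD u.length 0 = x := by simp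
  have hy : (u ++ x :: y :: v).getD (u.length + 1) 0 = y := by simp
  rw [lowerMove, ← hj, hx, hy]
  rcases Nat.eq_zero_or_pos x with rfl | hpos
  · obtain rfl : v = [] := by
      rw [← List.head?_eq_none_iff, Option.eq_none_iff_forall_not_mem]
      exact fun z hz => (hlt z hz).not_ge (Nat.zero_le z)
    left
    simp only [if_true, rkL_append_pair, ← hxy, List.append_nil, List.sum_nil, true_and]
    ring
  · simp only [hpos.ne', if_false]
    refine .inr ⟨u ++ (x - 1) :: (y + 1) :: v, u.length, by simp,
      ⟨u, x - 1, y + 1, v, rfl, rfl, rfl, by omega, ?_⟩, ?_⟩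
    · exact (pairSumsLE_append_pair_iff (by omega)).2 ⟨hu, hv,
        fun w hw => (hlast w hw).trans y.le_succ, fun z hz => Nat.le_sub_one_of_lt (hlt z hz)⟩
    · rw [rkL_append_pair, rkL_append_pair, show x - 1 + (y + 1) = x + y by omega]
      omega

end Moves

section Chains

lemma bijOn_union_Icc {α β : Type*} [LinearOrder β] {f : α → β} {S T : Set α} {c : α} {p q : β}
    (hS : Set.BijOn f S (Set.Icc p (f c))) (hT : Set.BijOn f T (Set.Icc (f c) q))
    (hcS : c ∈ S) (hcT : c ∈ T) : Set.BijOn f (S ∪ T) (Set.Icc p q) := by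
  have heq {x y : α} (hx : x ∈ S) (hy : y ∈ T) (hxy : f x = f y) : x = y :=
    (hS.injOn hx hcS (le_antisymm (hS.mapsTo hx).2 (hxy ▸ (hT.mapsTo hy).1))).trans
      (hT.injOn hcT hy (le_antisymm (hT.mapsTo hy).1 (hxy ▸ (hS.mapsTo hx).2)))
  rw [← Set.Icc_union_Icc_eq_Icc (hS.mapsTo hcS).1 (hT.mapsTo hcT).2]
  refine hS.union hT ?_
  rintro x (hx | hx) y (hy | hy) hxy
  exacts [hS.injOn hx hy hxy, heq hx hy hxy, (heq hy hx hxy.symm).symm, hT.injOn hx hy hxy]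

variable {s i : ℕ} {a b : List ℕ}

lemma IsInsertion.exists_of_mem_raiseList {f : ℕ} {c : List ℕ} (h : IsInsertion s b a i)
    (hc : c ∈ raiseList f a i) : ∃ j, IsInsertion s b c j := by
  induction f generalizing a i with
  | zero =>
    obtain rfl := List.mem_singleton.1 hc
    exact ⟨i, h⟩
  | succ f ih =>
    rcases h.raiseMove_cases with ⟨hm, -⟩ | ⟨a', j, hm, h', -⟩ <;>
      simp only [raiseList, hm, List.mem_cons, List.not_mem_nil, or_false] at hc
    · exact ⟨i, hc ▸ h⟩
    · exact hc.elim (fun hc => ⟨i, hc ▸ h⟩) (ih h')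

lemma IsInsertion.exists_of_mem_lowerList {f : ℕ} {c : List ℕ} (h : IsInsertion s b a i)
    (hc : c ∈ lowerList f a i) : ∃ j, IsInsertion s b c j := by
  induction f generalizing a i with
  | zero =>
    obtain rfl := List.mem_singleton.1 hc
    exact ⟨i, h⟩
  | succ f ih =>
    rcases h.lowerMove_cases with ⟨hm, -⟩ | ⟨a', j, hm, h', -⟩ <;>
      simp only [lowerList, hm, List.mem_cons, List.not_mem_nil, or_false] at hc
    · exact ⟨i, hc ▸ h⟩
    · exact hc.elim (fun hc => ⟨i, hc ▸ h⟩) (ih h')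

lemma IsInsertion.bijOn_rkL_raiseList {f : ℕ} (h : IsInsertion s b a i)
    (hf : rkL a ≤ rkL b + 2 * b.sum + f) :
    Set.BijOn rkL {c | c ∈ raiseList f a i} (Set.Icc (rkL b + 2 * b.sum) (rkL a)) := by
  induction f generalizing a i with
  | zero => simp [raiseList, ← h.le_rkL.antisymm hf]
  | succ f ih =>
    rcases h.raiseMove_cases with ⟨hm, hrk⟩ | ⟨a', j, hm, h', hrk⟩
    · simp [raiseList, hm, ← hrk]
    · have := (ih h' (by omega)).insert (a := a) (by simp [hrk])
      rw [hrk, Set.insert_Icc_right_eq_Icc_add_one (h'.le_rkL.trans (Nat.le_succ _))] at this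
      simpa [raiseList, hm, Set.insert_def, hrk] using this

lemma IsInsertion.bijOn_rkL_lowerList {f : ℕ} (h : IsInsertion s b a i)
    (hf : rkL b + (b.length + 1) * s ≤ rkL a + f) :
    Set.BijOn rkL {c | c ∈ lowerList f a i} (Set.Icc (rkL a) (rkL b + (b.length + 1) * s)) := by
  induction f generalizing a i with
  | zero => simp [lowerList, ← h.rkL_le.antisymm hf]
  | succ f ih =>
    rcases h.lowerMove_cases with ⟨hm, hrk⟩ | ⟨a', j, hm, h', hrk⟩
    · simp [lowerList, hm, ← hrk]
    · have := (ih h' (by omega)).insert (a := a) (by simp [hrk])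
      rw [hrk, Set.insert_Icc_add_one_left_eq_Icc (by have := h'.rkL_le; omega)] at this
      simpa [lowerList, hm, Set.insert_def] using this

lemma self_mem_raiseList (f : ℕ) (a : List ℕ) (i : ℕ) : a ∈ raiseList f a i := by
  cases f with
  | zero => simp [raiseList]
  | succ f => rw [raiseList]; split <;> simp

lemma self_mem_lowerList (f : ℕ) (a : List ℕ) (i : ℕ) : a ∈ lowerList f a i := by
  cases f with
  | zero => simp [lowerList]
  | succ f => rw [lowerList]; split <;> simp

lemma IsInsertion.exists_of_mem_Tset {c : List ℕ} (h : IsInsertion s b a i) (hc : c ∈ Tset a i) :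
    ∃ j, IsInsertion s b c j :=
  hc.elim h.exists_of_mem_raiseList h.exists_of_mem_lowerList

lemma IsInsertion.bijOn_rkL_Tset (h : IsInsertion s b a i) :
    Set.BijOn rkL (Tset a i)
      (Set.Icc (rkL b + 2 * b.sum) (rkL b + (b.length + 1) * s)) := by
  have hfuel : rkL b + (b.length + 1) * s ≤ rkL a + a.length * a.sum := by
    have := rkL_le_length_mul_sum b
    rw [h.length_eq, h.sum_eq]
    simp only [add_mul, mul_add]
    omega
  exact bijOn_union_Icc (h.bijOn_rkL_raiseList (Nat.le_add_left _ _))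
    (h.bijOn_rkL_lowerList hfuel) (self_mem_raiseList _ _ _) (self_mem_lowerList _ _ _)

lemma IsInsertion.ncard_Tset_add (h : IsInsertion s b a i) :
    (Tset a i).ncard + 2 * b.sum = (b.length + 1) * s + 1 := by
  have hle := h.le_rkL.trans h.rkL_le
  rw [h.bijOn_rkL_Tset.ncard_eq, ← Finset.coe_Icc, Set.ncard_coe_finset, Nat.card_Icc]
  omega

end Chains

end OHara

open OHara in
/-- Every transversal chain `T_i(𝔞)` of an element `𝔞 ∈ Q_n(d_0,…,d_k)` is contained in
`Q_n(d_0,…,d_k)` and has length (cardinality minus one) equal to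
`ℓ_n(d_0,…,d_k) = Σ_{j=0}^k (n-2j)·d_j`. -/
theorem transversal_chains_in_Q (n : ℕ) (hn : 1 ≤ n)
    (ds : List ℕ) (hdsl : ds.length = n / 2 + 1)
    (hne : ∃ j < ds.length, 0 < ds.getD j 0) :
    ∀ a ∈ Qset n ds, ∀ i ∈ Mset a,
      Tset a i ⊆ Qset n ds ∧
      (Tset a i).ncard =
        (∑ j ∈ Finset.range (n / 2 + 1), (n - 2 * j) * ds.getD j 0) + 1 := by
  intro a ha i hi
  obtain ⟨b, hb⟩ := exists_isInsertion_of_mem_Mset hi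
  refine ⟨fun c hc => ?_, ?_⟩
  · obtain ⟨j, hcj⟩ := hb.exists_of_mem_Tset hc
    exact ⟨by rw [hcj.length_eq, ← hb.length_eq, ha.1], by rw [hcj.sum_eq, ← hb.sum_eq, ha.2.1],
      by rw [hcj.sigmaL_eq hb, ha.2.2]⟩
  · have hcard := hb.ncard_Tset_add
    have hweights := sum_weights_add_two_mul_mOf n ds hdsl.le
    have hlength : b.length + 1 = n := by have := hb.length_eq; have := ha.1; omega
    have hsum : b.sum + ds.sum = mOf ds := by
      rw [← sprL_eq_sum_of_mem_Qset hn ha, ← hb.sum_eq, ha.2.1]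
    rw [hlength, sprL_eq_sum_of_mem_Qset hn ha] at hcard
    rw [hdsl] at hweights
    linarith
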